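/- arXiv:math/0608275 — 5 statements merged into one kernel-verified Lean document; each statement's English description precedes it below -/
import Mathlib

section
/- Let X and Z be real Banach spaces and Φ : X → Z a map that is Fréchet differentiable at every point, with derivative DΦ(y) ∈ L(X,Z) at y. Set E := Φ(0) and L := DΦ(0). Suppose C > 0 and R : Z → X is a map satisfying L(R(z)) = z and ‖R(z)‖ ≤ C‖z‖ for all z ∈ Z, and suppose ρ > 0 is such that for every y ∈ X with ‖y‖ ≤ ρ and every x ∈ X one has ‖L(x) − DΦ(y)(x)‖ ≤ ‖x‖/(2C). Then for every z ∈ Z with ‖z − E‖ ≤ ρ/(2C) there exists x ∈ X with ‖x‖ ≤ 2C‖z − E‖ (hence ‖x‖ ≤ ρ) and Φ(x) = z. -/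
/-!
On the ball of radius `ρ` the mean value inequality makes `Φ - L` Lipschitz with constant `1/(2C)`.
The Newton-type iteration `x ↦ x + R (z - Φ x)`, started at the centre, therefore contracts the
residual `z - Φ x` by a factor `1/2`; its steps sum to at most `2C‖z - Φ 0‖ ≤ ρ`, so it stays in the
ball and converges to a solution. For a Lipschitz constant `c < 1/C` the contraction factor is `cC`,
and the steps sum to at most `C/(1 - cC) = 1/(C⁻¹ - c)` times the initial residual.
-/

open Metric
open scoped NNReal

theorem approximatesLinearOn_of_hasFDerivWithinAt {𝕜 X Z : Type*} [RCLike 𝕜]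
    [NormedAddCommGroup X] [NormedSpace ℝ X] [NormedSpace 𝕜 X]
    [NormedAddCommGroup Z] [NormedSpace 𝕜 Z]
    {Φ : X → Z} {DΦ : X → X →L[𝕜] Z} {L : X →L[𝕜] Z} {s : Set X} {c : ℝ≥0} (hs : Convex ℝ s)
    (hΦ : ∀ y ∈ s, HasFDerivWithinAt Φ (DΦ y) s y) (hvar : ∀ y ∈ s, ‖DΦ y - L‖ ≤ c) :
    ApproximatesLinearOn Φ L s c := fun _ hx _ hy ↦
  hs.norm_image_sub_le_of_norm_hasFDerivWithin_le' hΦ hvar hy hx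

theorem exists_norm_sub_le_eq_of_approximatesLinearOn {𝕜 X Z : Type*}
    [NontriviallyNormedField 𝕜]
    [NormedAddCommGroup X] [NormedSpace 𝕜 X] [CompleteSpace X]
    [NormedAddCommGroup Z] [NormedSpace 𝕜 Z]
    {Φ : X → Z} {L : X →L[𝕜] Z} {b : X} {ρ : ℝ} {c : ℝ≥0}
    (hΦ : ApproximatesLinearOn Φ L (closedBall b ρ) c) (R : L.NonlinearRightInverse)
    (hc : (c : ℝ) < (R.nnnorm : ℝ)⁻¹) {z : Z}
    (hz : ‖z - Φ b‖ ≤ ((R.nnnorm : ℝ)⁻¹ - c) * ρ) :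
    ∃ x, ‖x - b‖ ≤ ‖z - Φ b‖ / ((R.nnnorm : ℝ)⁻¹ - c) ∧ Φ x = z := by
  have gap_pos : 0 < (R.nnnorm : ℝ)⁻¹ - c := sub_pos.2 hc
  have radius_le : ‖z - Φ b‖ / ((R.nnnorm : ℝ)⁻¹ - c) ≤ ρ := (div_le_iff₀' gap_pos).2 hz
  have surjOn := hΦ.surjOn_closedBall_of_nonlinearRightInverse R
    (by positivity) (closedBall_subset_closedBall radius_le)
  rw [mul_div_cancel₀ _ gap_pos.ne'] at surjOn
  obtain ⟨x, hx, hxz⟩ := surjOn (mem_closedBall_iff_norm.2 le_rfl)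
  exact ⟨x, mem_closedBall_iff_norm.1 hx, hxz⟩

theorem stmt_0_general {𝕜 X Z : Type*} [RCLike 𝕜]
    [NormedAddCommGroup X] [NormedSpace 𝕜 X] [CompleteSpace X]
    [NormedAddCommGroup Z] [NormedSpace 𝕜 Z]
    {Φ : X → Z} {DΦ : X → X →L[𝕜] Z} {L : X →L[𝕜] Z} {R : Z → X} {b : X} {ρ C c : ℝ}
    (hΦ : ∀ y ∈ closedBall b ρ, HasFDerivWithinAt Φ (DΦ y) (closedBall b ρ) y)
    (hLR : ∀ z, L (R z) = z) (hRC : ∀ z, ‖R z‖ ≤ C * ‖z‖) (hc₀ : 0 ≤ c) (hc : c < C⁻¹)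
    (hvar : ∀ y ∈ closedBall b ρ, ∀ x, ‖L x - DΦ y x‖ ≤ c * ‖x‖)
    {z : Z} (hz : ‖z - Φ b‖ ≤ (C⁻¹ - c) * ρ) :
    ∃ x, ‖x - b‖ ≤ ‖z - Φ b‖ / (C⁻¹ - c) ∧ Φ x = z := by
  let _ : NormedSpace ℝ X := NormedSpace.restrictScalars ℝ 𝕜 X
  have C_nonneg : 0 ≤ C := (inv_pos.1 (hc₀.trans_lt hc)).le
  have opNorm_le : ∀ y ∈ closedBall b ρ, ‖DΦ y - L‖ ≤ c := fun y hy ↦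
    ContinuousLinearMap.opNorm_le_bound _ hc₀ fun x ↦ by
      simpa only [sub_apply, norm_sub_rev] using hvar y hy x
  have approx : ApproximatesLinearOn Φ L (closedBall b ρ) ⟨c, hc₀⟩ :=
    approximatesLinearOn_of_hasFDerivWithinAt (convex_closedBall b ρ) hΦ opNorm_le
  exact exists_norm_sub_le_eq_of_approximatesLinearOn approx ⟨R, ⟨C, C_nonneg⟩, hRC, hLR⟩ hc hz

/-- **The quantitative Banach-space inverse function theorem.**
If `Φ : X → Z` is Fréchet differentiable everywhere, `L := DΦ(0)` has a right inverse `R`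
bounded by `C`, and `DΦ(y)` stays within `1/(2C)` of `L` (in operator norm, expressed
pointwise) for `‖y‖ ≤ ρ`, then every `z` with `‖z - Φ(0)‖ ≤ ρ/(2C)` is attained:
`Φ(x) = z` for some `x` with `‖x‖ ≤ 2C‖z - Φ(0)‖`. -/
theorem stmt_0 {X Z : Type*} [NormedAddCommGroup X] [NormedSpace ℝ X] [CompleteSpace X]
    [NormedAddCommGroup Z] [NormedSpace ℝ Z] [CompleteSpace Z]
    (Φ : X → Z) (DΦ : X → X →L[ℝ] Z) (hΦ : ∀ y : X, HasFDerivAt Φ (DΦ y) y)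
    (E : Z) (hE : E = Φ 0) (L : X →L[ℝ] Z) (hL : L = DΦ 0)
    (C : ℝ) (hC : 0 < C) (R : Z → X)
    (hLR : ∀ z : Z, L (R z) = z) (hRC : ∀ z : Z, ‖R z‖ ≤ C * ‖z‖)
    (ρ : ℝ) (hρ : 0 < ρ)
    (hvar : ∀ y : X, ‖y‖ ≤ ρ → ∀ x : X, ‖L x - DΦ y x‖ ≤ ‖x‖ / (2 * C)) :
    ∀ z : Z, ‖z - E‖ ≤ ρ / (2 * C) →
      ∃ x : X, ‖x‖ ≤ 2 * C * ‖z - E‖ ∧ Φ x = z := by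
  subst hE
  intro z hz
  have gap : C⁻¹ - (2 * C)⁻¹ = (2 * C)⁻¹ := by field_simp; norm_num
  have inv_lt : (2 * C)⁻¹ < C⁻¹ := inv_strictAnti₀ hC (by linarith only [hC])
  simpa only [gap, sub_zero, div_eq_inv_mul, inv_inv] using
    stmt_0_general (b := 0) (fun y _ ↦ (hΦ y).hasFDerivWithinAt) hLR hRC (by positivity) inv_lt
      (by simpa only [mem_closedBall_zero_iff, div_eq_inv_mul] using hvar)
      (by simpa only [gap, div_eq_inv_mul] using hz)
end

section
/- Let n ≥ 1 and A = (a₁,…,aₙ) ∈ (0,∞)ⁿ. Then there exists a constant C > 0 such that for every λ ≥ 1 and every k ∈ {1,…,n}, 0 ≤ θₖ(A) − θₖ(A,λ) ≤ C·λ^{−n}; i.e. θₖ(A,λ) = θₖ(A) + O(λ^{−n}) as λ → ∞. -/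
/-!
Discarding the constant `1/aₖ` and keeping only the leading term `∏ aᵢ · s²ⁿ` of
`s² P(A,s) = ∏ (1 + aᵢ s²) - 1` bounds the integrand by `1 / (√(∏ aᵢ) sⁿ⁺¹)` for `s > 0`, whose
integral over `(λ, ∞)` is `1 / (n √(∏ aᵢ) λⁿ)`. The integrand is integrable on the whole line
because `P(A,s) ≥ P(A,0) > 0`, so that it is dominated by a multiple of `1 / (1/aₖ + s²)`.
-/

open MeasureTheory Filter

/-- `P(A,λ) = ((1+a₁λ²)⋯(1+aₙλ²) − 1)/λ²` for `λ ≠ 0`, and `P(A,0) = a₁ + ⋯ + aₙ`. -/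
noncomputable def Pfun (n : ℕ) (A : Fin n → ℝ) (l : ℝ) : ℝ :=
  if l = 0 then ∑ k, A k else ((∏ k, (1 + A k * l ^ 2)) - 1) / l ^ 2

/-- The integrand `1 / ((1/aₖ + s²) √(P(A,s)))` whose integrals over `(-∞, λ]` and `ℝ` are the
angles `θₖ(A,λ)` and `θₖ(A)`. -/
noncomputable def angleIntegrand {n : ℕ} (A : Fin n → ℝ) (k : Fin n) (s : ℝ) : ℝ :=
  1 / ((1 / A k + s ^ 2) * √(Pfun n A s))

section ProdOneAdd

variable {ι R : Type*} [CommSemiring R] [PartialOrder R] [IsOrderedRing R]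
  {s : Finset ι} {f : ι → R}

theorem one_add_sum_le_prod_one_add (hf : ∀ i ∈ s, 0 ≤ f i) :
    1 + ∑ i ∈ s, f i ≤ ∏ i ∈ s, (1 + f i) := by
  induction s using Finset.cons_induction with
  | empty => simp
  | cons a s ha ih =>
    have hfs : ∀ i ∈ s, 0 ≤ f i := fun i hi => hf i (Finset.mem_cons_of_mem hi)
    have hfa : 0 ≤ f a := hf a (Finset.mem_cons_self a s)
    rw [Finset.sum_cons, Finset.prod_cons]
    calc 1 + (f a + ∑ i ∈ s, f i)
        ≤ 1 + (f a + ∑ i ∈ s, f i) + f a * ∑ i ∈ s, f i :=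
          le_add_of_nonneg_right (mul_nonneg hfa (Finset.sum_nonneg hfs))
      _ = (1 + f a) * (1 + ∑ i ∈ s, f i) := by ring
      _ ≤ (1 + f a) * ∏ i ∈ s, (1 + f i) :=
          mul_le_mul_of_nonneg_left (ih hfs) (add_nonneg zero_le_one hfa)

theorem one_add_prod_le_prod_one_add (hs : s.Nonempty) (hf : ∀ i ∈ s, 0 ≤ f i) :
    1 + ∏ i ∈ s, f i ≤ ∏ i ∈ s, (1 + f i) := by
  obtain ⟨i, hi⟩ := hs
  simpa only [Finset.prod_const_one] using
    Finset.prod_add_prod_le (g := fun _ => 1) hi le_rfl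
      (fun j hj _ => le_add_of_nonneg_right (hf j hj))
      (fun _ _ _ => le_add_of_nonneg_left zero_le_one) (fun _ _ => zero_le_one) hf

end ProdOneAdd

theorem integrable_inv_add_sq {c : ℝ} (hc : 0 < c) : Integrable fun s : ℝ => (c + s ^ 2)⁻¹ := by
  have hscaled := (integrable_inv_one_add_sq.comp_div (Real.sqrt_pos.2 hc).ne').const_mul c⁻¹
  refine hscaled.congr (Eventually.of_forall fun s => ?_)
  simp only [div_pow, Real.sq_sqrt hc.le, ← mul_inv]
  rw [mul_add, mul_one, mul_div_cancel₀ _ hc.ne']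

section PowerTail

variable {n : ℕ} {c : ℝ}

theorem inv_pow_succ_eq_rpow {s : ℝ} (hs : 0 ≤ s) :
    (s ^ (n + 1))⁻¹ = s ^ (-(n : ℝ) - 1) := by
  rw [← Real.rpow_natCast, ← Real.rpow_neg hs, Nat.cast_add_one, neg_add']

theorem integrableOn_Ioi_inv_pow_succ (hn : n ≠ 0) (hc : 0 < c) :
    IntegrableOn (fun s : ℝ => (s ^ (n + 1))⁻¹) (Set.Ioi c) := by
  have hn_pos : (0 : ℝ) < n := by positivity
  exact (integrableOn_Ioi_rpow_of_lt (by linarith) hc).congr_fun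
    (fun s hs => (inv_pow_succ_eq_rpow (hc.trans hs).le).symm) measurableSet_Ioi

theorem integral_Ioi_inv_pow_succ (hn : n ≠ 0) (hc : 0 < c) :
    ∫ s in Set.Ioi c, (s ^ (n + 1))⁻¹ = (n * c ^ n)⁻¹ := by
  have hn_pos : (0 : ℝ) < n := by positivity
  calc ∫ s in Set.Ioi c, (s ^ (n + 1))⁻¹
      = ∫ s in Set.Ioi c, s ^ (-(n : ℝ) - 1) :=
        setIntegral_congr_fun measurableSet_Ioi fun s hs => inv_pow_succ_eq_rpow (hc.trans hs).le
    _ = -c ^ (-(n : ℝ)) / -n := by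
        rw [integral_Ioi_rpow_of_lt (by linarith) hc, sub_add_cancel]
    _ = (n * c ^ n)⁻¹ := by
        rw [Real.rpow_neg hc.le, Real.rpow_natCast, neg_div_neg_eq, mul_inv_rev, div_eq_mul_inv]

end PowerTail

section Pfun

variable {n : ℕ} {A : Fin n → ℝ}

theorem sq_mul_pfun (A : Fin n → ℝ) (s : ℝ) :
    s ^ 2 * Pfun n A s = ∏ i, (1 + A i * s ^ 2) - 1 := by
  rcases eq_or_ne s 0 with rfl | hs
  · simp
  · rw [Pfun, if_neg hs, mul_div_cancel₀ _ (pow_ne_zero 2 hs)]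

@[fun_prop]
theorem measurable_pfun (A : Fin n → ℝ) : Measurable (Pfun n A) := by
  unfold Pfun
  exact Measurable.ite (measurableSet_singleton 0) measurable_const (by fun_prop)

theorem sum_le_pfun (hA : ∀ i, 0 ≤ A i) (s : ℝ) : ∑ i, A i ≤ Pfun n A s := by
  rcases eq_or_ne s 0 with rfl | hs
  · simp [Pfun]
  · have hs_sq : 0 < s ^ 2 := by positivity
    have bernoulli : 1 + ∑ i, A i * s ^ 2 ≤ ∏ i, (1 + A i * s ^ 2) :=
      one_add_sum_le_prod_one_add fun i _ => mul_nonneg (hA i) hs_sq.le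
    refine le_of_mul_le_mul_left ?_ hs_sq
    rw [sq_mul_pfun, mul_comm, Finset.sum_mul]
    linarith

theorem prod_mul_pow_le_sq_mul_pfun (hn : n ≠ 0) (hA : ∀ i, 0 ≤ A i) (s : ℝ) :
    (∏ i, A i) * (s ^ n) ^ 2 ≤ s ^ 2 * Pfun n A s := by
  have : NeZero n := ⟨hn⟩
  have hprod : 1 + ∏ i, A i * s ^ 2 ≤ ∏ i, (1 + A i * s ^ 2) :=
    one_add_prod_le_prod_one_add Finset.univ_nonempty fun i _ => mul_nonneg (hA i) (sq_nonneg s)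
  rw [Finset.prod_mul_distrib, Fin.prod_const, pow_right_comm] at hprod
  rw [sq_mul_pfun]
  linarith

theorem sqrt_prod_mul_pow_le_mul_sqrt_pfun (hn : n ≠ 0) (hA : ∀ i, 0 ≤ A i) {s : ℝ} (hs : 0 ≤ s) :
    √(∏ i, A i) * s ^ n ≤ s * √(Pfun n A s) := by
  have hsqrt := Real.sqrt_le_sqrt (prod_mul_pow_le_sq_mul_pfun hn hA s)
  rwa [Real.sqrt_mul (Finset.prod_nonneg fun i _ => hA i), Real.sqrt_sq (pow_nonneg hs n),
    Real.sqrt_mul (sq_nonneg s), Real.sqrt_sq hs] at hsqrt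

end Pfun

section AngleIntegrand

variable {n : ℕ} {A : Fin n → ℝ} {k : Fin n}

theorem angleIntegrand_nonneg (hk : 0 ≤ A k) (s : ℝ) : 0 ≤ angleIntegrand A k s := by
  unfold angleIntegrand
  positivity

theorem integrable_angleIntegrand (hA : ∀ i, 0 ≤ A i) (hk : 0 < A k) :
    Integrable (angleIntegrand A k) := by
  have hsum : 0 < ∑ i, A i := Finset.sum_pos' (fun i _ => hA i) ⟨k, Finset.mem_univ k, hk⟩
  have hdom : Integrable fun s : ℝ => (1 / A k + s ^ 2)⁻¹ * (√(∑ i, A i))⁻¹ :=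
    (integrable_inv_add_sq (one_div_pos.2 hk)).mul_const _
  have hmeas : Measurable (angleIntegrand A k) := by
    unfold angleIntegrand
    fun_prop
  refine hdom.mono' hmeas.aestronglyMeasurable (Eventually.of_forall fun s => ?_)
  rw [Real.norm_of_nonneg (angleIntegrand_nonneg hk.le s), angleIntegrand, one_div, mul_inv]
  gcongr
  exact sum_le_pfun hA s

theorem angleIntegrand_le_inv_pow_succ (hA : ∀ i, 0 < A i) {s : ℝ} (hs : 0 < s) :
    angleIntegrand A k s ≤ (√(∏ i, A i))⁻¹ * (s ^ (n + 1))⁻¹ := by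
  have hprod : 0 < ∏ i, A i := Finset.prod_pos fun i _ => hA i
  have hinv : 0 < 1 / A k := one_div_pos.2 (hA k)
  rw [angleIntegrand, one_div, ← mul_inv]
  refine inv_anti₀ (by positivity) ?_
  calc √(∏ i, A i) * s ^ (n + 1) = s * (√(∏ i, A i) * s ^ n) := by ring
    _ ≤ s * (s * √(Pfun n A s)) :=
        mul_le_mul_of_nonneg_left
          (sqrt_prod_mul_pow_le_mul_sqrt_pfun k.pos.ne' (fun i => (hA i).le) hs.le) hs.le
    _ = s ^ 2 * √(Pfun n A s) := by ring
    _ ≤ (1 / A k + s ^ 2) * √(Pfun n A s) := by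
        gcongr
        exact le_add_of_nonneg_left hinv.le

theorem setIntegral_Ioi_angleIntegrand_le (hA : ∀ i, 0 < A i) {l : ℝ} (hl : 0 < l) :
    ∫ s in Set.Ioi l, angleIntegrand A k s ≤ 1 / (n * √(∏ i, A i)) / l ^ n := by
  have hn : n ≠ 0 := k.pos.ne'
  calc ∫ s in Set.Ioi l, angleIntegrand A k s
      ≤ ∫ s in Set.Ioi l, (√(∏ i, A i))⁻¹ * (s ^ (n + 1))⁻¹ :=
        setIntegral_mono_on (integrable_angleIntegrand (fun i => (hA i).le) (hA k)).integrableOn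
          ((integrableOn_Ioi_inv_pow_succ hn hl).const_mul _) measurableSet_Ioi
          fun s hs => angleIntegrand_le_inv_pow_succ hA (hl.trans hs)
    _ = 1 / (n * √(∏ i, A i)) / l ^ n := by
        rw [integral_const_mul, integral_Ioi_inv_pow_succ hn hl]
        ring

end AngleIntegrand

theorem stmt_7_general {n : ℕ} {A : Fin n → ℝ} (hA : ∀ i, 0 < A i) {l : ℝ} (hl : 0 < l)
    (k : Fin n) :
    0 ≤ (∫ s, angleIntegrand A k s) - ∫ s in Set.Iic l, angleIntegrand A k s ∧
      (∫ s, angleIntegrand A k s) - ∫ s in Set.Iic l, angleIntegrand A k s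
        ≤ 1 / (n * √(∏ i, A i)) / l ^ n := by
  have hint : Integrable (angleIntegrand A k) :=
    integrable_angleIntegrand (fun i => (hA i).le) (hA k)
  rw [← intervalIntegral.integral_Iic_add_Ioi hint.integrableOn hint.integrableOn,
    add_sub_cancel_left]
  exact ⟨integral_nonneg (angleIntegrand_nonneg (hA k).le), setIntegral_Ioi_angleIntegrand_le hA hl⟩

/-- **Asymptotics of the Lawlor angle functions:** `θₖ(A,λ) = θₖ(A) + O(λ^{−n})` as
`λ → ∞`; more precisely `0 ≤ θₖ(A) − θₖ(A,λ) ≤ C·λ^{−n}` for all `λ ≥ 1`, with a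
constant `C` independent of `λ` and `k`. -/
theorem stmt_7 (n : ℕ) (hn : 1 ≤ n) (A : Fin n → ℝ) (hA : ∀ k, 0 < A k) :
    ∃ C : ℝ, 0 < C ∧ ∀ l : ℝ, 1 ≤ l → ∀ k : Fin n,
      0 ≤ (∫ s : ℝ, 1 / ((1 / A k + s ^ 2) * Real.sqrt (Pfun n A s)))
          - (∫ s in Set.Iic l, 1 / ((1 / A k + s ^ 2) * Real.sqrt (Pfun n A s))) ∧
      (∫ s : ℝ, 1 / ((1 / A k + s ^ 2) * Real.sqrt (Pfun n A s)))
          - (∫ s in Set.Iic l, 1 / ((1 / A k + s ^ 2) * Real.sqrt (Pfun n A s)))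
        ≤ C / l ^ n := by
  have hprod : 0 < ∏ i, A i := Finset.prod_pos fun i _ => hA i
  exact ⟨1 / (n * √(∏ i, A i)), by positivity,
    fun l hl k => stmt_7_general hA (zero_lt_one.trans_le hl) k⟩
end

section
/- For every integer n ≥ 1 and every A = (a₁,…,aₙ) ∈ (0,∞)ⁿ, the characteristic angles of the asymptotic planes of the Lawlor neck satisfy the angle criterion: Σ_{k=1}^{n} θₖ(A) = Σ_{k=1}^{n} ∫_{−∞}^{∞} ds/((1/aₖ + s²)√(P(A,s))) = π. -/
open MeasureTheory

/-!
Put `Q(s) = ∏ₖ (1 + aₖ s²)`. For `s > 0` we have `√P(A,s) = √(Q(s) - 1) / s`, and the logarithmic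
derivative of `Q` is `Q'/Q = ∑ₖ 2 s / (1/aₖ + s²)`. Hence the sum of the integrands of the angles
is `Q' / (2 Q √(Q - 1))`, the derivative of `arctan √(Q - 1)`, a function which increases from `0`
at `s = 0` to `π/2` at infinity. As the integrands are even, the angles sum to `2 * (π/2)`.
-/

open Filter Set
open scoped Topology

section Finset

variable {ι : Type*} {t : Finset ι}

theorem le_prod_of_one_le {R : Type*} [CommSemiring R] [PartialOrder R] [IsOrderedRing R]
    {f : ι → R} (hf : ∀ i ∈ t, 1 ≤ f i) {k : ι} (hk : k ∈ t) : f k ≤ ∏ i ∈ t, f i := by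
  classical
  rw [← Finset.mul_prod_erase t f hk]
  exact le_mul_of_one_le_right (zero_le_one.trans (hf k hk))
    (Finset.one_le_prod fun i hi => hf i (Finset.mem_of_mem_erase hi))

theorem hasDerivAt_prod_mul_sum_div {𝕜 : Type*} [NontriviallyNormedField 𝕜] {f : ι → 𝕜 → 𝕜}
    {f' : ι → 𝕜} {x : 𝕜} (hf : ∀ i ∈ t, HasDerivAt (f i) (f' i) x) (hne : ∀ i ∈ t, f i x ≠ 0) :
    HasDerivAt (fun y => ∏ i ∈ t, f i y) ((∏ i ∈ t, f i x) * ∑ i ∈ t, f' i / f i x) x := by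
  classical
  refine (HasDerivAt.fun_finsetProd hf).congr_deriv ?_
  rw [Finset.mul_sum]
  refine Finset.sum_congr rfl fun i hi => ?_
  rw [← Finset.mul_prod_erase t (f · x) hi, smul_eq_mul]
  field_simp [hne i hi]

variable {a : ι → ℝ}

theorem one_add_mul_sq_le_prod (ha : ∀ i ∈ t, 0 ≤ a i) {k : ι} (hk : k ∈ t) (s : ℝ) :
    1 + a k * s ^ 2 ≤ ∏ i ∈ t, (1 + a i * s ^ 2) :=
  le_prod_of_one_le (f := fun i => 1 + a i * s ^ 2)
    (fun i hi => le_add_of_nonneg_right (mul_nonneg (ha i hi) (sq_nonneg s))) hk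

theorem one_lt_prod_one_add_mul_sq (ha : ∀ i ∈ t, 0 < a i) (ht : t.Nonempty) {s : ℝ}
    (hs : s ≠ 0) : 1 < ∏ i ∈ t, (1 + a i * s ^ 2) := by
  obtain ⟨k, hk⟩ := ht
  have hpos : 0 < a k * s ^ 2 := mul_pos (ha k hk) (by positivity)
  exact (lt_add_of_pos_right 1 hpos).trans_le
    (one_add_mul_sq_le_prod (fun i hi => (ha i hi).le) hk s)

theorem tendsto_prod_one_add_mul_sq_atTop (ha : ∀ i ∈ t, 0 < a i) (ht : t.Nonempty) :
    Tendsto (fun s : ℝ => ∏ i ∈ t, (1 + a i * s ^ 2)) atTop atTop := by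
  obtain ⟨k, hk⟩ := ht
  exact tendsto_atTop_mono (one_add_mul_sq_le_prod (fun i hi => (ha i hi).le) hk)
    (tendsto_atTop_add_const_left _ _
      ((tendsto_pow_atTop two_ne_zero).const_mul_atTop (ha k hk)))

theorem hasDerivAt_prod_one_add_mul_sq {s : ℝ} (hne : ∀ i ∈ t, 1 + a i * s ^ 2 ≠ 0) :
    HasDerivAt (fun s : ℝ => ∏ i ∈ t, (1 + a i * s ^ 2))
      ((∏ i ∈ t, (1 + a i * s ^ 2)) * ∑ i ∈ t, a i * (2 * s) / (1 + a i * s ^ 2)) s :=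
  hasDerivAt_prod_mul_sum_div (f := fun i s => 1 + a i * s ^ 2)
    (fun i _ => by simpa using ((hasDerivAt_pow 2 s).const_mul (a i)).const_add 1) hne

end Finset

theorem hasDerivAt_arctan_sqrt_sub_one {f : ℝ → ℝ} {f' x : ℝ} (hf : HasDerivAt f f' x)
    (hx : 1 < f x) :
    HasDerivAt (fun y => Real.arctan √(f y - 1)) (f' / (f x * (2 * √(f x - 1)))) x := by
  have hpos : 0 < f x - 1 := sub_pos.2 hx
  refine ((hf.sub_const 1).sqrt hpos.ne').arctan.congr_deriv ?_
  rw [Real.sq_sqrt hpos.le, add_sub_cancel, div_mul_div_comm, one_mul]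

theorem tendsto_arctan_sqrt_sub_one {α : Type*} {l : Filter α} {f : α → ℝ}
    (hf : Tendsto f l atTop) :
    Tendsto (fun x => Real.arctan √(f x - 1)) l (𝓝 (Real.pi / 2)) :=
  (Real.tendsto_arctan_atTop.mono_right nhdsWithin_le_nhds).comp
    (Real.tendsto_sqrt_atTop.comp (tendsto_atTop_add_const_right _ (-1) hf))

section LawlorNeck

variable {n : ℕ} {A : Fin n → ℝ}

/-- The integrand `1 / ((1/aₖ + s²) √P(A,s))` of the characteristic angle `θₖ(A)`. -/
noncomputable def angleDensity (A : Fin n → ℝ) (k : Fin n) (s : ℝ) : ℝ :=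
  1 / ((1 / A k + s ^ 2) * √(Pfun n A s))

/-- The primitive `arctan √(∏ₖ (1 + aₖ s²) - 1)` of the sum of the angle densities on
`(0, ∞)`, normalised to vanish at `s = 0`. -/
noncomputable def totalAngle (A : Fin n → ℝ) (s : ℝ) : ℝ :=
  Real.arctan √(∏ k, (1 + A k * s ^ 2) - 1)

theorem measurable_Pfun : Measurable (Pfun n A) :=
  Measurable.ite (measurableSet_singleton 0) measurable_const (by fun_prop)

theorem Pfun_abs (s : ℝ) : Pfun n A |s| = Pfun n A s := by
  simp only [Pfun, abs_eq_zero, sq_abs]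

theorem sqrt_Pfun_of_pos {s : ℝ} (hs : 0 < s) :
    √(Pfun n A s) = √(∏ k, (1 + A k * s ^ 2) - 1) / s := by
  rw [Pfun, if_neg hs.ne', Real.sqrt_div' _ (sq_nonneg s), Real.sqrt_sq hs.le]

theorem measurable_angleDensity (k : Fin n) : Measurable (angleDensity A k) := by
  have := measurable_Pfun (A := A)
  unfold angleDensity
  fun_prop

theorem angleDensity_nonneg {k : Fin n} (hk : 0 ≤ A k) (s : ℝ) : 0 ≤ angleDensity A k s := by
  unfold angleDensity
  positivity

theorem angleDensity_abs (k : Fin n) (s : ℝ) : angleDensity A k |s| = angleDensity A k s := by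
  simp only [angleDensity, Pfun_abs, sq_abs]

theorem integral_angleDensity_eq_two_mul (k : Fin n) :
    ∫ s, angleDensity A k s = 2 * ∫ s in Ioi 0, angleDensity A k s := by
  simp only [← integral_comp_abs, angleDensity_abs]

theorem angleDensity_of_pos {k : Fin n} (hk : A k ≠ 0) {s : ℝ} (hs : 0 < s) :
    angleDensity A k s =
      A k * (2 * s) / (1 + A k * s ^ 2) / (2 * √(∏ j, (1 + A j * s ^ 2) - 1)) := by
  have hfactor : 1 / A k + s ^ 2 = (1 + A k * s ^ 2) / A k := by field_simp
  rw [angleDensity, sqrt_Pfun_of_pos hs, hfactor]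
  field_simp

theorem totalAngle_zero : totalAngle A 0 = 0 := by
  simp [totalAngle]

theorem continuous_totalAngle : Continuous (totalAngle A) := by
  unfold totalAngle
  fun_prop

variable [NeZero n] (hA : ∀ k, 0 < A k)
include hA

theorem tendsto_totalAngle : Tendsto (totalAngle A) atTop (𝓝 (Real.pi / 2)) :=
  tendsto_arctan_sqrt_sub_one
    (tendsto_prod_one_add_mul_sq_atTop (fun k _ => hA k) Finset.univ_nonempty)

theorem hasDerivAt_totalAngle {s : ℝ} (hs : 0 < s) :
    HasDerivAt (totalAngle A) (∑ k, angleDensity A k s) s := by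
  have hfactor : ∀ k ∈ Finset.univ, 1 + A k * s ^ 2 ≠ 0 := fun k _ => by
    have := hA k
    positivity
  have hone : 1 < ∏ k, (1 + A k * s ^ 2) :=
    one_lt_prod_one_add_mul_sq (fun k _ => hA k) Finset.univ_nonempty hs.ne'
  refine (hasDerivAt_arctan_sqrt_sub_one
    (hasDerivAt_prod_one_add_mul_sq hfactor) hone).congr_deriv ?_
  rw [mul_div_mul_left _ _ (zero_lt_one.trans hone).ne', Finset.sum_div]
  exact Finset.sum_congr rfl fun k _ => (angleDensity_of_pos (hA k).ne' hs).symm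

theorem integrableOn_sum_angleDensity :
    IntegrableOn (fun s => ∑ k, angleDensity A k s) (Ioi 0) :=
  integrableOn_Ioi_deriv_of_nonneg continuous_totalAngle.continuousWithinAt
    (fun _ hs => hasDerivAt_totalAngle hA hs)
    (fun s _ => Finset.sum_nonneg fun k _ => angleDensity_nonneg (hA k).le s)
    (tendsto_totalAngle hA)

theorem integral_Ioi_sum_angleDensity :
    ∫ s in Ioi 0, ∑ k, angleDensity A k s = Real.pi / 2 := by
  rw [integral_Ioi_of_hasDerivAt_of_tendsto continuous_totalAngle.continuousWithinAt
    (fun _ hs => hasDerivAt_totalAngle hA hs) (integrableOn_sum_angleDensity hA)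
    (tendsto_totalAngle hA), totalAngle_zero, sub_zero]

theorem integrableOn_angleDensity (k : Fin n) : IntegrableOn (angleDensity A k) (Ioi 0) := by
  refine (integrableOn_sum_angleDensity hA).mono' (measurable_angleDensity k).aestronglyMeasurable
    (.of_forall fun s => ?_)
  rw [Real.norm_of_nonneg (angleDensity_nonneg (hA k).le s)]
  exact Finset.single_le_sum (f := fun j => angleDensity A j s)
    (fun j _ => angleDensity_nonneg (hA j).le s) (Finset.mem_univ k)

end LawlorNeck

/-- **The asymptotic planes of the Lawlor neck satisfy the angle criterion:**
the characteristic angles `θₖ(A) = ∫_ℝ ds/((1/aₖ + s²)√P(A,s))` sum to `π`. -/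
theorem stmt_8 (n : ℕ) (hn : 1 ≤ n) (A : Fin n → ℝ) (hA : ∀ k, 0 < A k) :
    ∑ k : Fin n, (∫ s : ℝ, 1 / ((1 / A k + s ^ 2) * Real.sqrt (Pfun n A s))) = Real.pi := by
  have : NeZero n := ⟨Nat.one_le_iff_ne_zero.1 hn⟩
  calc ∑ k, ∫ s, angleDensity A k s
      = 2 * ∑ k, ∫ s in Ioi 0, angleDensity A k s := by
        simp only [integral_angleDensity_eq_two_mul, Finset.mul_sum]
    _ = 2 * ∫ s in Ioi 0, ∑ k, angleDensity A k s := by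
        rw [integral_finsetSum _ fun k _ => integrableOn_angleDensity hA k]
    _ = Real.pi := by
        rw [integral_Ioi_sum_angleDensity hA, mul_div_cancel₀ _ two_ne_zero]
end

section
/- For every integer n ≥ 1 and every n-tuple of angles (φ₁,…,φₙ) ∈ (0,π)ⁿ with φ₁ + ⋯ + φₙ = π, there exists A = (a₁,…,aₙ) ∈ (0,∞)ⁿ such that θₖ(A) = φₖ for every k ∈ {1,…,n}. Hence every pair of transverse (special) Lagrangian planes whose characteristic angles satisfy the angle criterion can be realized as the pair of asymptotic planes of a Lawlor neck. -/
open MeasureTheory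

/-! In the coordinates `x k = log (A k)` the angles are the partial derivatives of the potential
`G x = 4 * ∫ s in (0, ∞), (arctan (s * √P(A, s)) - arctan s) / s`. This potential is monotone, a
Frullani integral gives `G (x + t • 1) = G x + π * t`, and comparing `P(A, s)` with `A k` gives
`π * x k ≤ G x`. If the `φ k` are positive with sum `π`, then `x ↦ G x - ∑ k, φ k * x k` is
therefore invariant under `x ↦ x + t • 1` and coercive on each hyperplane `x i = 0`, so it attains
its minimum. At a minimizer the gradient vanishes, that is, the angles of `A` are the `φ k`. -/

open Set Filter Topology Real

theorem lipschitzWith_one_arctan : LipschitzWith 1 arctan := by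
  refine lipschitzWith_of_nnnorm_deriv_le differentiable_arctan fun x => ?_
  rw [Real.deriv_arctan, ← NNReal.coe_le_coe, coe_nnnorm, norm_of_nonneg (by positivity),
    NNReal.coe_one]
  exact div_le_one_of_le₀ (by nlinarith) (by positivity)

theorem abs_arctan_sub_arctan_le (x y : ℝ) : |arctan x - arctan y| ≤ |x - y| := by
  simpa [dist_eq] using lipschitzWith_one_arctan.dist_le_mul x y

theorem abs_arctan_sub_arctan_le_of_pos {x y : ℝ} (hx : 0 < x) (hy : 0 < y) :
    |arctan x - arctan y| ≤ x⁻¹ + y⁻¹ := by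
  have h := abs_arctan_sub_arctan_le y⁻¹ x⁻¹
  rw [arctan_inv_of_pos hx, arctan_inv_of_pos hy, sub_sub_sub_cancel_left] at h
  calc |arctan x - arctan y| ≤ |y⁻¹ - x⁻¹| := h
    _ ≤ |y⁻¹| + |x⁻¹| := abs_sub _ _
    _ = x⁻¹ + y⁻¹ := by rw [abs_of_pos (inv_pos.2 hx), abs_of_pos (inv_pos.2 hy), add_comm]

theorem integrableOn_inv_mul_arctan_sub_arctan {r : ℝ → ℝ} {c C : ℝ} (hr : Measurable r)
    (hc : 0 < c) (hlower : ∀ s, 0 < s → c * s ≤ r s) (hupper : ∀ s ∈ Ioc 0 1, r s ≤ C * s) :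
    IntegrableOn (fun s => s⁻¹ * (arctan (r s) - arctan s)) (Ioi 0) := by
  have hmeas : Measurable fun s => s⁻¹ * (arctan (r s) - arctan s) := by fun_prop
  have hr_pos : ∀ s, 0 < s → 0 < r s := fun s hs => (mul_pos hc hs).trans_le (hlower s hs)
  rw [← Ioc_union_Ioi_eq_Ioi zero_le_one]
  refine IntegrableOn.union ?near_zero ?near_top
  case near_zero =>
    refine Measure.integrableOn_of_bounded (M := C + 1) measure_Ioc_lt_top.ne
      hmeas.aestronglyMeasurable ?_
    filter_upwards [ae_restrict_mem measurableSet_Ioc] with s hs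
    have hdiff : |arctan (r s) - arctan s| ≤ (C + 1) * s :=
      (abs_arctan_sub_arctan_le _ _).trans <| abs_sub_le_iff.2
        ⟨by linarith [hupper s hs, hs.1], by linarith [hr_pos s hs.1, hupper s hs]⟩
    rwa [norm_mul, norm_inv, norm_of_nonneg hs.1.le, inv_mul_le_iff₀ hs.1, norm_eq_abs, mul_comm]
  case near_top =>
    have hbound : IntegrableOn (fun s : ℝ => (c⁻¹ + 1) * s ^ (-2 : ℝ)) (Ioi 1) :=
      (integrableOn_Ioi_rpow_of_lt (by norm_num) one_pos).const_mul _
    refine hbound.mono' hmeas.aestronglyMeasurable ?_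
    filter_upwards [ae_restrict_mem measurableSet_Ioi] with s (hs : 1 < s)
    have hs0 : 0 < s := one_pos.trans hs
    have hdiff : |arctan (r s) - arctan s| ≤ (c⁻¹ + 1) * s⁻¹ :=
      calc |arctan (r s) - arctan s| ≤ (r s)⁻¹ + s⁻¹ :=
            abs_arctan_sub_arctan_le_of_pos (hr_pos s hs0) hs0
        _ ≤ (c * s)⁻¹ + s⁻¹ := by gcongr; exact hlower s hs0
        _ = (c⁻¹ + 1) * s⁻¹ := by rw [mul_inv]; ring
    calc ‖s⁻¹ * (arctan (r s) - arctan s)‖ = s⁻¹ * |arctan (r s) - arctan s| := by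
          rw [norm_mul, norm_inv, norm_of_nonneg hs0.le, norm_eq_abs]
      _ ≤ s⁻¹ * ((c⁻¹ + 1) * s⁻¹) := by gcongr
      _ = (c⁻¹ + 1) * s ^ (-2 : ℝ) := by
          rw [rpow_neg hs0.le, rpow_two]; ring

theorem integrableOn_inv_mul_arctan_mul_sub_arctan {c : ℝ} (hc : 0 < c) :
    IntegrableOn (fun s => s⁻¹ * (arctan (c * s) - arctan s)) (Ioi 0) :=
  integrableOn_inv_mul_arctan_sub_arctan (by fun_prop) hc (fun _ _ => le_rfl) fun _ _ => le_rfl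

theorem integral_Ioi_inv_mul_arctan_mul_sub_arctan {c : ℝ} (hc : 0 < c) :
    ∫ s in Ioi 0, s⁻¹ * (arctan (c * s) - arctan s) = π / 2 * log c := by
  have h := Frullani.integral_Ioi_eq (continuous_arctan.continuousOn.locallyIntegrableOn
      measurableSet_Ioi) hc one_pos (continuous_arctan.continuousWithinAt (x := 0))
    (tendsto_nhds_of_tendsto_nhdsWithin tendsto_arctan_atTop)
    (by simpa only [one_mul] using! integrableOn_inv_mul_arctan_mul_sub_arctan hc)
  simpa [log_inv, mul_comm] using h

section ShiftEquivariant

variable {ι : Type*} [Fintype ι] {G : (ι → ℝ) → ℝ} {c : ℝ}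

theorem lipschitzWith_of_monotone_of_map_add_const (hmono : Monotone G)
    (hshift : ∀ x t, G (x + Function.const ι t) = G x + c * t) :
    LipschitzWith c.toNNReal G := by
  refine LipschitzWith.of_le_add_mul' c fun x y => ?_
  rw [← hshift]
  refine hmono fun k => ?_
  have hk : x k - y k ≤ dist x y := (le_abs_self _).trans (dist_le_pi_dist x y k)
  simpa using sub_le_iff_le_add'.1 hk

theorem mul_norm_le_sub_dotProduct {φ x : ι → ℝ} {ε : ℝ} {i : ι}
    (hlower : ∀ k, c * x k ≤ G x) (hε : 0 < ε) (hεφ : ∀ k, ε ≤ φ k) (hsum : ∑ k, φ k = c)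
    (hx : x i = 0) : ε * ‖x‖ ≤ G x - φ ⬝ᵥ x := by
  have : Nonempty ι := ⟨i⟩
  obtain ⟨m, hm⟩ := Finite.exists_max x
  have hgap : ∀ k, ε * (x m - x k) ≤ G x - φ ⬝ᵥ x := fun k =>
    calc ε * (x m - x k) ≤ φ k * (x m - x k) :=
          mul_le_mul_of_nonneg_right (hεφ k) (sub_nonneg.2 (hm k))
      _ ≤ ∑ j, φ j * (x m - x j) :=
          Finset.single_le_sum (f := fun j => φ j * (x m - x j))
            (fun j _ => mul_nonneg (hε.le.trans (hεφ j)) (sub_nonneg.2 (hm j)))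
            (Finset.mem_univ k)
      _ = c * x m - φ ⬝ᵥ x := by
          simp only [mul_sub, Finset.sum_sub_distrib, ← Finset.sum_mul, hsum, dotProduct]
      _ ≤ G x - φ ⬝ᵥ x := sub_le_sub_right (hlower m) _
  have hnonneg : 0 ≤ G x - φ ⬝ᵥ x := by simpa using hgap m
  rw [← le_div_iff₀' hε, pi_norm_le_iff_of_nonneg (by positivity)]
  intro k
  have hi := (le_div_iff₀' hε).2 (hgap i)
  have hk := (le_div_iff₀' hε).2 (hgap k)
  rw [norm_eq_abs, abs_le]
  constructor <;> linarith [hm k, hm i]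

theorem exists_forall_sub_dotProduct_le [Nonempty ι] {φ : ι → ℝ} (hmono : Monotone G)
    (hshift : ∀ x t, G (x + Function.const ι t) = G x + c * t) (hlower : ∀ x k, c * x k ≤ G x)
    (hφ : ∀ k, 0 < φ k) (hsum : ∑ k, φ k = c) :
    ∃ x, ∀ y, G x - φ ⬝ᵥ x ≤ G y - φ ⬝ᵥ y := by
  set F : (ι → ℝ) → ℝ := fun x => G x - φ ⬝ᵥ x with hF
  have hF_cont : Continuous F :=
    (lipschitzWith_of_monotone_of_map_add_const hmono hshift).continuous.sub (by fun_prop)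
  have hF_shift : ∀ x t, F (x + Function.const ι t) = F x := by
    intro x t
    have hconst : φ ⬝ᵥ Function.const ι t = c * t := by
      simp only [dotProduct, Function.const_apply, ← Finset.sum_mul, hsum]
    simp only [hF, hshift, dotProduct_add, hconst]
    ring
  obtain ⟨i, hi⟩ := Finite.exists_min φ
  have hcoercive : ∀ᶠ x in cocompact (ι → ℝ) ⊓ 𝓟 {x | x i = 0}, F 0 ≤ F x := by
    rw [eventually_inf_principal]
    filter_upwards [tendsto_norm_cocompact_atTop.eventually_ge_atTop (F 0 / φ i)] with x hx hxi
    exact ((div_le_iff₀' (hφ i)).1 hx).trans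
      (mul_norm_le_sub_dotProduct (hlower x) (hφ i) hi hsum hxi)
  obtain ⟨x, -, hmin⟩ := hF_cont.continuousOn.exists_isMinOn'
    (isClosed_eq (continuous_apply i) continuous_const) rfl hcoercive
  refine ⟨x, fun y => ?_⟩
  calc F x ≤ F (y + Function.const ι (-y i)) := hmin (by simp)
    _ = F y := hF_shift y _

end ShiftEquivariant

theorem prod_one_add_mul_le {ι : Type*} (s : Finset ι) {f : ι → ℝ} {u : ℝ} (hf : ∀ k, 0 ≤ f k)
    (hu₀ : 0 ≤ u) (hu₁ : u ≤ 1) :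
    ∏ k ∈ s, (1 + f k * u) ≤ 1 + u * (∏ k ∈ s, (1 + f k) - 1) := by
  classical
  induction s using Finset.induction_on with
  | empty => simp
  | insert i s hi ih =>
    rw [Finset.prod_insert hi, Finset.prod_insert hi]
    set p := ∏ k ∈ s, (1 + f k)
    have hp : 1 ≤ p := Finset.one_le_prod fun k _ => le_add_of_nonneg_right (hf k)
    have hgap : 0 ≤ f i * u * (1 - u) * (p - 1) :=
      mul_nonneg (mul_nonneg (mul_nonneg (hf i) hu₀) (sub_nonneg.2 hu₁)) (sub_nonneg.2 hp)
    calc (1 + f i * u) * ∏ k ∈ s, (1 + f k * u) ≤ (1 + f i * u) * (1 + u * (p - 1)) :=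
          mul_le_mul_of_nonneg_left ih (by nlinarith [hf i])
      _ ≤ 1 + u * ((1 + f i) * p - 1) := by linarith

namespace LawlorNeck

variable {ι : Type*} [Fintype ι] {A B : ι → ℝ} {k : ι} {s : ℝ}

/-- The polynomial `P(A, s)` of `Pfun`, for a tuple `A` indexed by any finite type. -/
noncomputable def poly (A : ι → ℝ) (s : ℝ) : ℝ :=
  if s = 0 then ∑ k, A k else ((∏ k, (1 + A k * s ^ 2)) - 1) / s ^ 2

/-- The angle `θₖ(A)` between the asymptotic planes of the Lawlor neck with parameters `A`. -/
noncomputable def angle (A : ι → ℝ) (k : ι) : ℝ :=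
  ∫ s, 1 / ((1 / A k + s ^ 2) * √(poly A s))

/-- The integrand of `potential`. The integral of `arctan (s * √(poly A s)) / s` alone diverges at
infinity, whence the subtracted `arctan s`. -/
noncomputable def potentialIntegrand (A : ι → ℝ) (s : ℝ) : ℝ :=
  s⁻¹ * (arctan (s * √(poly A s)) - arctan s)

/-- A primitive of the angles: `4 * potential A` has derivative `θₖ(A)` with respect to
`log (A k)`. -/
noncomputable def potential (A : ι → ℝ) : ℝ :=
  ∫ s in Ioi 0, potentialIntegrand A s

theorem poly_of_ne_zero (hs : s ≠ 0) : poly A s = ((∏ k, (1 + A k * s ^ 2)) - 1) / s ^ 2 :=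
  if_neg hs

theorem one_add_sq_mul_poly (A : ι → ℝ) (s : ℝ) :
    1 + s ^ 2 * poly A s = ∏ k, (1 + A k * s ^ 2) := by
  rcases eq_or_ne s 0 with rfl | hs
  · simp
  · rw [poly_of_ne_zero hs, mul_div_cancel₀ _ (pow_ne_zero 2 hs), add_sub_cancel]

theorem poly_abs (A : ι → ℝ) (s : ℝ) : poly A |s| = poly A s := by
  simp only [poly, abs_eq_zero, sq_abs]

theorem measurable_poly (A : ι → ℝ) : Measurable (poly A) := by
  refine Measurable.ite (measurableSet_singleton 0) measurable_const ?_
  fun_prop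

theorem poly_mono (hA : ∀ k, 0 ≤ A k) (hAB : ∀ k, A k ≤ B k) (s : ℝ) : poly A s ≤ poly B s := by
  unfold poly
  split_ifs
  · exact Finset.sum_le_sum fun k _ => hAB k
  · have hprod : ∏ k, (1 + A k * s ^ 2) ≤ ∏ k, (1 + B k * s ^ 2) :=
      Finset.prod_le_prod (fun k _ => by have := hA k; positivity) fun k _ => by
        gcongr; exact hAB k
    gcongr

theorem apply_le_poly (hA : ∀ k, 0 ≤ A k) (k : ι) (s : ℝ) : A k ≤ poly A s := by
  rcases eq_or_ne s 0 with rfl | hs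
  · rw [poly, if_pos rfl]
    exact Finset.single_le_sum (fun j _ => hA j) (Finset.mem_univ k)
  · have hfactor : ∀ j, 1 ≤ 1 + A j * s ^ 2 := fun j =>
      le_add_of_nonneg_right (mul_nonneg (hA j) (sq_nonneg s))
    have hprod : 1 + A k * s ^ 2 ≤ ∏ j, (1 + A j * s ^ 2) := by
      simpa using Finset.prod_le_prod_of_subset_of_one_le (Finset.subset_univ {k})
        (fun j _ => zero_le_one.trans (hfactor j)) fun j _ _ => hfactor j
    rw [poly_of_ne_zero hs, le_div_iff₀ (by positivity)]
    linarith

theorem poly_pos (hA : ∀ k, 0 < A k) (k : ι) (s : ℝ) : 0 < poly A s :=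
  (hA k).trans_le (apply_le_poly (fun j => (hA j).le) k s)

theorem poly_le_poly_one (hA : ∀ k, 0 ≤ A k) (hs : s ∈ Ioc 0 1) : poly A s ≤ poly A 1 := by
  have hprod := prod_one_add_mul_le Finset.univ hA (sq_nonneg s)
    (pow_le_one₀ hs.1.le hs.2)
  rw [poly_of_ne_zero hs.1.ne', poly_of_ne_zero one_ne_zero, div_le_iff₀ (pow_pos hs.1 2)]
  simp only [one_pow, mul_one, div_one]
  linarith

theorem mul_sqrt_poly_smul {c : ℝ} (hc : 0 < c) (hs : 0 < s) (A : ι → ℝ) :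
    s * √(poly (c ^ 2 • A) s) = c * s * √(poly A (c * s)) := by
  have hpoly : poly (c ^ 2 • A) s = c ^ 2 * poly A (c * s) := by
    have hfactor : ∀ k, (c ^ 2 • A) k * s ^ 2 = A k * (c * s) ^ 2 := fun k => by
      rw [Pi.smul_apply, smul_eq_mul]; ring
    simp only [poly_of_ne_zero hs.ne', poly_of_ne_zero (mul_pos hc hs).ne', hfactor]
    rw [mul_pow c s, ← mul_div_assoc, mul_div_mul_left _ _ (pow_ne_zero 2 hc.ne')]
  rw [hpoly, sqrt_mul (sq_nonneg c), sqrt_sq hc.le]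
  ring

theorem hasDerivAt_poly_update [DecidableEq ι] (A : ι → ℝ) (k : ι) (hs : s ≠ 0) {a : ℝ}
    (ha : 1 + a * s ^ 2 ≠ 0) :
    HasDerivAt (fun t => poly (Function.update A k t) s)
      ((1 + s ^ 2 * poly (Function.update A k a) s) / (1 + a * s ^ 2)) a := by
  have hprod : ∀ t, ∏ j, (1 + Function.update A k t j * s ^ 2) =
      (1 + t * s ^ 2) * ∏ j ∈ Finset.univ.erase k, (1 + A j * s ^ 2) := by
    intro t
    rw [← Finset.mul_prod_erase _ _ (Finset.mem_univ k), Function.update_self]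
    congr 1
    refine Finset.prod_congr rfl fun j hj => ?_
    rw [Function.update_of_ne (Finset.ne_of_mem_erase hj)]
  rw [one_add_sq_mul_poly, hprod, mul_div_cancel_left₀ _ ha]
  simp only [poly_of_ne_zero hs, hprod]
  convert! (((((hasDerivAt_id a).mul_const (s ^ 2)).const_add 1).mul_const _).sub_const 1).div_const
    (s ^ 2) using 1
  rw [one_mul, mul_div_cancel_left₀ _ (pow_ne_zero 2 hs)]

theorem angle_eq_mul_integral_Ioi (hk : A k ≠ 0) :
    angle A k = 4 * A k * ∫ s in Ioi 0, 1 / (2 * (1 + A k * s ^ 2) * √(poly A s)) := by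
  have hfactor : ∀ s, 1 / ((1 / A k + s ^ 2) * √(poly A s)) =
      2 * A k * (1 / (2 * (1 + A k * s ^ 2) * √(poly A s))) := fun s => by
    rw [div_add' _ _ _ hk, mul_comm (s ^ 2)]
    field_simp
  have habs := integral_comp_abs (f := fun s => 1 / (2 * (1 + A k * s ^ 2) * √(poly A s)))
  simp only [poly_abs, sq_abs] at habs
  simp only [angle, hfactor, integral_const_mul, habs]
  ring

theorem measurable_potentialIntegrand (A : ι → ℝ) : Measurable (potentialIntegrand A) := by
  have := measurable_poly A
  unfold potentialIntegrand
  fun_prop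

theorem integrableOn_potentialIntegrand (hA : ∀ k, 0 < A k) (k : ι) :
    IntegrableOn (potentialIntegrand A) (Ioi 0) := by
  have hA' : ∀ k, 0 ≤ A k := fun k => (hA k).le
  have hmeas := measurable_poly A
  refine integrableOn_inv_mul_arctan_sub_arctan (c := √(A k)) (C := √(poly A 1)) (by fun_prop)
    (sqrt_pos.2 (hA k)) (fun s hs => ?_) fun s hs => ?_
  · rw [mul_comm]
    gcongr
    exact apply_le_poly hA' k s
  · rw [mul_comm]
    have := hs.1
    gcongr
    exact poly_le_poly_one hA' hs

theorem potential_mono (hA : ∀ k, 0 < A k) (hAB : ∀ k, A k ≤ B k) (k : ι) :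
    potential A ≤ potential B := by
  refine setIntegral_mono_on (integrableOn_potentialIntegrand hA k)
    (integrableOn_potentialIntegrand (fun j => (hA j).trans_le (hAB j)) k) measurableSet_Ioi
    fun s (hs : 0 < s) => ?_
  unfold potentialIntegrand
  have := arctan_mono (mul_le_mul_of_nonneg_left
    (sqrt_le_sqrt (poly_mono (fun j => (hA j).le) hAB s)) hs.le)
  gcongr

theorem log_apply_le_potential (hA : ∀ k, 0 < A k) (k : ι) :
    π / 4 * log (A k) ≤ potential A := by
  have hsqrt : 0 < √(A k) := sqrt_pos.2 (hA k)
  calc π / 4 * log (A k) = π / 2 * log √(A k) := by rw [log_sqrt (hA k).le]; ring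
    _ = ∫ s in Ioi 0, s⁻¹ * (arctan (√(A k) * s) - arctan s) :=
        (integral_Ioi_inv_mul_arctan_mul_sub_arctan hsqrt).symm
    _ ≤ potential A := by
        refine setIntegral_mono_on (integrableOn_inv_mul_arctan_mul_sub_arctan hsqrt)
          (integrableOn_potentialIntegrand hA k) measurableSet_Ioi fun s (hs : 0 < s) => ?_
        unfold potentialIntegrand
        have := arctan_mono (mul_le_mul_of_nonneg_left
          (sqrt_le_sqrt (apply_le_poly (fun j => (hA j).le) k s)) hs.le)
        rw [mul_comm √(A k)]
        gcongr

theorem potential_sq_smul (hA : ∀ k, 0 < A k) (k : ι) {c : ℝ} (hc : 0 < c) :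
    potential (c ^ 2 • A) = potential A + π / 2 * log c := by
  have hsplit : ∀ s ∈ Ioi (0 : ℝ), potentialIntegrand (c ^ 2 • A) s =
      c * potentialIntegrand A (c * s) + s⁻¹ * (arctan (c * s) - arctan s) := by
    intro s (hs : 0 < s)
    rw [potentialIntegrand, potentialIntegrand, mul_sqrt_poly_smul hc hs]
    field_simp
    ring
  have hscaled : IntegrableOn (fun s => c * potentialIntegrand A (c * s)) (Ioi 0) :=
    Integrable.const_mul ((integrableOn_Ioi_comp_mul_left_iff (potentialIntegrand A) 0 hc).2
      (by simpa using integrableOn_potentialIntegrand hA k)) c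
  calc potential (c ^ 2 • A)
      = ∫ s in Ioi 0, (c * potentialIntegrand A (c * s) + s⁻¹ * (arctan (c * s) - arctan s)) :=
        setIntegral_congr_fun measurableSet_Ioi hsplit
    _ = c * (∫ s in Ioi 0, potentialIntegrand A (c * s)) + π / 2 * log c := by
        rw [integral_add hscaled (integrableOn_inv_mul_arctan_mul_sub_arctan hc),
          integral_const_mul, integral_Ioi_inv_mul_arctan_mul_sub_arctan hc]
    _ = potential A + π / 2 * log c := by
        rw [integral_comp_mul_left_Ioi _ 0 hc, mul_zero, smul_eq_mul, mul_inv_cancel_left₀ hc.ne',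
          potential]

theorem hasDerivAt_potentialIntegrand_update [DecidableEq ι] (hA : ∀ j, 0 < A j) (k : ι)
    (hs : 0 < s) {a : ℝ} (ha : 0 < a) :
    HasDerivAt (fun t => potentialIntegrand (Function.update A k t) s)
      (1 / (2 * (1 + a * s ^ 2) * √(poly (Function.update A k a) s))) a := by
  set p := poly (Function.update A k a) s with hp
  have hp_pos : 0 < p := poly_pos ((Function.forall_update_iff A fun _ t => 0 < t).2
    ⟨ha, fun j _ => hA j⟩) k s
  have hfactor : 0 < 1 + a * s ^ 2 := by positivity
  have hderiv := ((((hasDerivAt_poly_update A k hs.ne' hfactor.ne').sqrt hp_pos.ne').const_mul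
    s).arctan.sub_const (arctan s)).const_mul s⁻¹
  refine hderiv.congr_deriv ?_
  rw [← hp, mul_pow, sq_sqrt hp_pos.le]
  have : 0 < 1 + s ^ 2 * p := by positivity
  field_simp

theorem one_div_mul_sqrt_poly_le {b : ℝ} (hb : 0 < b) (hA : ∀ j, 0 < A j) (hbA : b ≤ A k) :
    1 / (2 * (1 + A k * s ^ 2) * √(poly A s)) ≤ (2 * √b)⁻¹ * (1 + (√b * s) ^ 2)⁻¹ := by
  have hpoly : b ≤ poly A s := hbA.trans (apply_le_poly (fun j => (hA j).le) k s)
  calc 1 / (2 * (1 + A k * s ^ 2) * √(poly A s)) ≤ 1 / (2 * (1 + b * s ^ 2) * √b) := by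
        have := hA k
        gcongr
    _ = (2 * √b)⁻¹ * (1 + (√b * s) ^ 2)⁻¹ := by
        rw [mul_pow, sq_sqrt hb.le, one_div, ← mul_inv]; ring_nf

theorem hasDerivAt_potential_update [DecidableEq ι] (hA : ∀ j, 0 < A j) (k : ι) :
    HasDerivAt (fun t => potential (Function.update A k t)) (angle A k / (4 * A k)) (A k) := by
  have hb : 0 < A k / 2 := half_pos (hA k)
  have hupdate : ∀ {t}, 0 < t → ∀ j, 0 < Function.update A k t j := fun ht =>
    (Function.forall_update_iff A fun _ t => 0 < t).2 ⟨ht, fun j _ => hA j⟩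
  have hmeas := measurable_poly (Function.update A k (A k))
  have key := hasDerivAt_integral_of_dominated_loc_of_deriv_le
    (μ := volume.restrict (Ioi 0))
    (F := fun t s => potentialIntegrand (Function.update A k t) s)
    (F' := fun t s => 1 / (2 * (1 + t * s ^ 2) * √(poly (Function.update A k t) s)))
    (bound := fun s => (2 * √(A k / 2))⁻¹ * (1 + (√(A k / 2) * s) ^ 2)⁻¹)
    (Ioi_mem_nhds (half_lt_self (hA k)))
    (Eventually.of_forall fun t => (measurable_potentialIntegrand _).aestronglyMeasurable)
    (integrableOn_potentialIntegrand (hupdate (hA k)) k)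
    (Measurable.aestronglyMeasurable <| by fun_prop) ?bound ?integrable ?deriv
  case bound =>
    filter_upwards with s t (ht : A k / 2 < t)
    have ht₀ := hb.trans ht
    rw [norm_of_nonneg (by positivity)]
    simpa using one_div_mul_sqrt_poly_le (s := s) hb (hupdate ht₀) (k := k) (by simpa using ht.le)
  case integrable =>
    exact ((integrable_inv_one_add_sq.comp_mul_left' (sqrt_pos.2 hb).ne').const_mul _).integrableOn
  case deriv =>
    filter_upwards [ae_restrict_mem measurableSet_Ioi] with s (hs : 0 < s) t (ht : A k / 2 < t)
    exact hasDerivAt_potentialIntegrand_update hA k hs (hb.trans ht)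
  refine key.2.congr_deriv ?_
  rw [angle_eq_mul_integral_Ioi (hA k).ne', Function.update_eq_self,
    mul_div_cancel_left₀ _ (mul_pos four_pos (hA k)).ne']

/-- `4 * potential` in the logarithmic coordinates `x k = log (A k)`; its gradient is the vector of
angles. -/
noncomputable def logPotential (x : ι → ℝ) : ℝ :=
  4 * potential fun k => exp (x k)

theorem logPotential_mono [Nonempty ι] : Monotone (logPotential (ι := ι)) := fun x y hxy => by
  have := potential_mono (fun k => exp_pos (x k)) (fun k => exp_le_exp.2 (hxy k))
    (Classical.arbitrary ι)
  unfold logPotential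
  gcongr

theorem pi_mul_apply_le_logPotential (x : ι → ℝ) (k : ι) : π * x k ≤ logPotential x := by
  have h := log_apply_le_potential (fun k => exp_pos (x k)) k
  rw [log_exp] at h
  unfold logPotential
  linarith

theorem logPotential_add_const [Nonempty ι] (x : ι → ℝ) (t : ℝ) :
    logPotential (x + Function.const ι t) = logPotential x + π * t := by
  have hexp : (fun k => exp ((x + Function.const ι t) k)) =
      exp (t / 2) ^ 2 • fun k => exp (x k) := by
    funext k
    rw [Pi.smul_apply, smul_eq_mul, ← exp_nat_mul, ← exp_add, Pi.add_apply, Function.const_apply]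
    ring_nf
  rw [logPotential, hexp, potential_sq_smul (fun k => exp_pos (x k)) (Classical.arbitrary ι)
    (exp_pos _), log_exp, logPotential]
  ring

theorem hasDerivAt_logPotential_update [DecidableEq ι] (x : ι → ℝ) (k : ι) :
    HasDerivAt (fun t => logPotential (Function.update x k t)) (angle (fun j => exp (x j)) k)
      (x k) := by
  have hexp : ∀ t, (fun j => exp (Function.update x k t j)) =
      Function.update (fun j => exp (x j)) k (exp t) := fun t =>
    funext (Function.apply_update (fun _ => exp) x k t)
  have h := ((hasDerivAt_potential_update (fun j => exp_pos (x j)) k).comp (x k)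
    (hasDerivAt_exp (x k))).const_mul 4
  simp only [logPotential, hexp]
  refine h.congr_deriv ?_
  have := exp_pos (x k)
  field_simp

theorem angle_eq_of_forall_sub_dotProduct_le {φ x : ι → ℝ}
    (hx : ∀ y, logPotential x - φ ⬝ᵥ x ≤ logPotential y - φ ⬝ᵥ y) (k : ι) :
    angle (fun j => exp (x j)) k = φ k := by
  classical
  have hlinear : HasDerivAt (fun t => φ ⬝ᵥ Function.update x k t) (φ k) (x k) := by
    have h := HasDerivAt.fun_sum (u := Finset.univ) fun j _ =>
      (hasDerivAt_pi.1 (hasDerivAt_update x k (x k)) j).const_mul (φ j)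
    exact h.congr_deriv (dotProduct_single_one φ k)
  have hmin : IsLocalMin
      (fun t => logPotential (Function.update x k t) - φ ⬝ᵥ Function.update x k t) (x k) :=
    Eventually.of_forall fun t => by
      simpa only [Function.update_eq_self] using hx (Function.update x k t)
  exact sub_eq_zero.1 (hmin.hasDerivAt_eq_zero ((hasDerivAt_logPotential_update x k).sub hlinear))

end LawlorNeck

open LawlorNeck in
theorem stmt_9_general {ι : Type*} [Fintype ι] (φ : ι → ℝ) (hφ : ∀ k, 0 < φ k)
    (hsum : ∑ k, φ k = π) : ∃ A : ι → ℝ, (∀ k, 0 < A k) ∧ ∀ k, angle A k = φ k := by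
  have : Nonempty ι := by
    by_contra hempty
    rw [not_nonempty_iff] at hempty
    exact pi_ne_zero (by simpa using hsum.symm)
  obtain ⟨x, hx⟩ := exists_forall_sub_dotProduct_le logPotential_mono logPotential_add_const
    pi_mul_apply_le_logPotential hφ hsum
  exact ⟨fun k => exp (x k), fun k => exp_pos (x k), angle_eq_of_forall_sub_dotProduct_le hx⟩

/-- **Every admissible angle tuple is realized by a Lawlor neck:** for all angles
`φ₁, …, φₙ ∈ (0,π)` with `φ₁ + ⋯ + φₙ = π` there exists `A ∈ (0,∞)ⁿ` such that
`θₖ(A) = ∫_ℝ ds/((1/aₖ + s²)√P(A,s)) = φₖ` for every `k`. -/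
theorem stmt_9 (n : ℕ) (hn : 1 ≤ n) (φ : Fin n → ℝ)
    (hφ : ∀ k, φ k ∈ Set.Ioo 0 Real.pi) (hsum : ∑ k, φ k = Real.pi) :
    ∃ A : Fin n → ℝ, (∀ k, 0 < A k) ∧
      ∀ k : Fin n,
        (∫ s : ℝ, 1 / ((1 / A k + s ^ 2) * Real.sqrt (Pfun n A s))) = φ k :=
  stmt_9_general φ (fun k => (hφ k).1) hsum
end

section
/- Let n ≥ 2, let m₂,…,mₙ be integers with |m_s| ≥ 4 such that 2·(1/m₂ + ⋯ + 1/mₙ) is not an integer, set ξ_s := exp(2πi/m_s) for s = 2,…,n and ξ_{n+1} := −exp(−2πi(1/m₂ + ⋯ + 1/mₙ)), and let U be the unitary map of ℂ^{n+1} defined by U(z¹, z², z³, …, z^{n+1}) := (ξ₂z², z¹, ξ₃z³, …, ξ_{n+1}z^{n+1}). Let S₀ := { x ∈ ℂ^{n+1} : every coordinate of x is real and ‖x‖ = 1 }. Then S₀ ∩ U(S₀) = { e₂, −e₂ } and S₀ ∩ U^{−1}(S₀) = { e₁, −e₁ }, where e₁ = (1,0,…,0) and e₂ = (0,1,0,…,0).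 -/
/-!
If `y` and `U y` are both real, then each coordinate of `y` that `U` multiplies by a non-real
number vanishes. Exactly one coordinate of `U` carries a real coefficient, namely
`(U y)₂ = y₁`, so `y = ±e₁`; this determines `S₀ ∩ U⁻¹(S₀)`, and `S₀ ∩ U(S₀)` is its image
under `U`.
-/

section RealUnitSphere

/-- The equatorial sphere `S₀` of real unit vectors of `ℂ^ι`. It is written as the subset of the
complex space cut out by `Im xᵢ = 0`, since it is to be intersected with its images under complex
linear maps. -/
def realUnitSphere (ι : Type*) [Fintype ι] : Set (EuclideanSpace ℂ ι) :=
  {x | (∀ i, (x i).im = 0) ∧ ‖x‖ = 1}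

variable {ι : Type*} [Fintype ι]

theorem neg_mem_realUnitSphere_iff {x : EuclideanSpace ℂ ι} :
    -x ∈ realUnitSphere ι ↔ x ∈ realUnitSphere ι := by
  simp [realUnitSphere]

variable [DecidableEq ι]

theorem single_mem_realUnitSphere_iff {i : ι} {a : ℂ} :
    EuclideanSpace.single i a ∈ realUnitSphere ι ↔ a = 1 ∨ a = -1 := by
  constructor
  · rintro ⟨him, hnorm⟩
    obtain ⟨r, rfl⟩ : ∃ r : ℝ, (r : ℂ) = a := ⟨a.re, Complex.ext rfl (by simpa using (him i).symm)⟩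
    have hr : |r| = 1 := by simpa using hnorm
    exact_mod_cast eq_or_eq_neg_of_abs_eq hr
  · rintro (rfl | rfl) <;>
      simp [realUnitSphere, apply_ite Complex.im]

theorem eq_single_or_eq_neg_single_of_mem_realUnitSphere {x : EuclideanSpace ℂ ι} {i : ι}
    (hx : x ∈ realUnitSphere ι) (hsupp : ∀ j ≠ i, x j = 0) :
    x = EuclideanSpace.single i 1 ∨ x = -EuclideanSpace.single i 1 := by
  obtain ⟨a, rfl⟩ : ∃ a, x = EuclideanSpace.single i a := by
    refine ⟨x i, ?_⟩
    ext j
    by_cases hj : j = i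
    · simp [hj]
    · simp [hj, hsupp j hj]
  obtain rfl | rfl := single_mem_realUnitSphere_iff.1 hx
  · exact .inl rfl
  · exact .inr (PiLp.single_neg 2 i)

end RealUnitSphere

section MonomialMap

/-- The linear map of `ℂ^ι` given by the monomial matrix with permutation `σ` and
coefficients `c`, where `c i` is the entry of *row* `i`: it sends `z` to `(cᵢ z_{σ(i)})ᵢ`. -/
def monomialMap {ι : Type*} (σ : Equiv.Perm ι) (c : ι → ℂ) :
    EuclideanSpace ℂ ι →ₗ[ℂ] EuclideanSpace ℂ ι where
  toFun z := WithLp.toLp 2 fun i => c i * z (σ i)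
  map_add' x y := by ext i; simp [mul_add]
  map_smul' a x := by ext i; simp [mul_left_comm]

@[simp]
theorem monomialMap_apply {ι : Type*} (σ : Equiv.Perm ι) (c : ι → ℂ) (z : EuclideanSpace ℂ ι)
    (i : ι) : monomialMap σ c z i = c i * z (σ i) :=
  rfl

theorem monomialMap_single {ι : Type*} [DecidableEq ι] (σ : Equiv.Perm ι) (c : ι → ℂ) (i : ι)
    (a : ℂ) : monomialMap σ c (EuclideanSpace.single (σ i) a) =
      EuclideanSpace.single i (c i * a) := by
  ext j
  by_cases hj : j = i
  · simp [hj]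
  · simp [hj]

theorem im_mul_eq_zero_iff_of_im_eq_zero {a b : ℂ} (hb : b.im = 0) :
    (a * b).im = 0 ↔ a.im = 0 ∨ b = 0 := by
  simp [Complex.mul_im, Complex.ext_iff, hb]

variable {ι : Type*} [Fintype ι] [DecidableEq ι] {σ : Equiv.Perm ι} {c : ι → ℂ} {i₀ : ι}

theorem realUnitSphere_inter_preimage_monomialMap (hc₀ : c i₀ = 1 ∨ c i₀ = -1)
    (hc : ∀ i ≠ i₀, (c i).im ≠ 0) :
    realUnitSphere ι ∩ monomialMap σ c ⁻¹' realUnitSphere ι =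
      {EuclideanSpace.single (σ i₀) 1, -EuclideanSpace.single (σ i₀) 1} := by
  ext x
  constructor
  · rintro ⟨hx, hUx⟩
    have hzero : ∀ i ≠ i₀, x (σ i) = 0 := fun i hi =>
      ((im_mul_eq_zero_iff_of_im_eq_zero (hx.1 (σ i))).1 (hUx.1 i)).resolve_left (hc i hi)
    refine eq_single_or_eq_neg_single_of_mem_realUnitSphere hx fun j hj => ?_
    simpa using hzero (σ.symm j) (mt σ.symm_apply_eq.1 hj)
  · have hmem : EuclideanSpace.single (σ i₀) 1 ∈ realUnitSphere ι :=
      single_mem_realUnitSphere_iff.2 (.inl rfl)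
    have hUmem : monomialMap σ c (EuclideanSpace.single (σ i₀) 1) ∈ realUnitSphere ι := by
      rwa [monomialMap_single, mul_one, single_mem_realUnitSphere_iff]
    rintro (rfl | rfl)
    · exact ⟨hmem, hUmem⟩
    · rw [Set.mem_inter_iff, Set.mem_preimage, map_neg, neg_mem_realUnitSphere_iff,
        neg_mem_realUnitSphere_iff]
      exact ⟨hmem, hUmem⟩

theorem realUnitSphere_inter_image_monomialMap (hc₀ : c i₀ = 1 ∨ c i₀ = -1)
    (hc : ∀ i ≠ i₀, (c i).im ≠ 0) :
    realUnitSphere ι ∩ monomialMap σ c '' realUnitSphere ι =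
      {EuclideanSpace.single i₀ 1, -EuclideanSpace.single i₀ 1} := by
  have hU : monomialMap σ c (EuclideanSpace.single (σ i₀) 1) = EuclideanSpace.single i₀ 1 ∨
      monomialMap σ c (EuclideanSpace.single (σ i₀) 1) = -EuclideanSpace.single i₀ 1 := by
    refine eq_single_or_eq_neg_single_of_mem_realUnitSphere ?_ fun j hj => ?_
    · rwa [monomialMap_single, mul_one, single_mem_realUnitSphere_iff]
    · simp [hj]
  rw [Set.inter_comm, ← Set.image_inter_preimage,
    realUnitSphere_inter_preimage_monomialMap hc₀ hc, Set.image_pair, map_neg]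
  obtain hU | hU := hU
  · rw [hU]
  · rw [hU, neg_neg, Set.pair_comm]

end MonomialMap

section NonrealExponentials

open Complex Real

theorem im_exp_two_pi_mul_I_mul_eq_zero_iff {t : ℝ} :
    (exp (2 * π * I * t)).im = 0 ↔ ∃ z : ℤ, 2 * t = z := by
  have harg : (2 * π * I * t : ℂ) = ((2 * t * π : ℝ) : ℂ) * I := by push_cast; ring
  rw [harg, exp_ofReal_mul_I_im, Real.sin_eq_zero_iff]
  simp only [mul_eq_mul_right_iff, Real.pi_ne_zero, or_false, eq_comm]

theorem im_exp_two_pi_mul_I_div_int_ne_zero {m : ℤ} (hm : 3 ≤ |m|) :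
    (exp (2 * π * I / m)).im ≠ 0 := by
  have harg : (2 * π * I / m : ℂ) = 2 * π * I * ((1 / m : ℝ) : ℂ) := by push_cast; ring
  rw [harg, ne_eq, im_exp_two_pi_mul_I_mul_eq_zero_iff]
  rintro ⟨z, hz⟩
  have hm₀ : (m : ℝ) ≠ 0 := by
    intro h
    simp [Int.cast_eq_zero.1 h] at hm
  have hdvd : m ∣ 2 := ⟨z, by field_simp at hz; exact_mod_cast hz⟩
  have := Int.le_of_dvd two_pos ((abs_dvd m 2).2 hdvd)
  omega

theorem im_neg_exp_neg_two_pi_mul_I_mul_ne_zero {t : ℝ} (ht : ∀ z : ℤ, 2 * t ≠ z) :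
    (-exp (-(2 * π * I) * t)).im ≠ 0 := by
  have harg : (-(2 * π * I) * t : ℂ) = 2 * π * I * ((-t : ℝ) : ℂ) := by push_cast; ring
  rw [harg, neg_im, neg_ne_zero, ne_eq, im_exp_two_pi_mul_I_mul_eq_zero_iff]
  rintro ⟨z, hz⟩
  exact ht (-z) (by push_cast; linarith)

theorem im_ne_zero_of_eq_exp_of_last_eq_neg_exp {N : ℕ} {m : Fin N → ℤ} {ξ : Fin (N + 1) → ℂ}
    (hm : ∀ j, 3 ≤ |m j|) (hsum : ∀ z : ℤ, 2 * ∑ j, (1 / (m j : ℝ)) ≠ z)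
    (hξ : ∀ j : Fin N, ξ j.castSucc = exp (2 * π * I / m j))
    (hlast : ξ (Fin.last N) = -exp (-(2 * π * I) * ∑ j, (1 / (m j : ℂ)))) (k : Fin (N + 1)) :
    (ξ k).im ≠ 0 := by
  induction k using Fin.lastCases with
  | last =>
    rw [hlast]
    exact_mod_cast im_neg_exp_neg_two_pi_mul_I_mul_ne_zero hsum
  | cast j =>
    rw [hξ]
    exact im_exp_two_pi_mul_I_div_int_ne_zero (hm j)

end NonrealExponentials

theorem stmt_16_general (n : ℕ) (hn : 0 < n) (ξ : Fin n → ℂ) (hξ : ∀ k, (ξ k).im ≠ 0)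
    (U : EuclideanSpace ℂ (Fin (n + 1)) → EuclideanSpace ℂ (Fin (n + 1)))
    (hU : ∀ z : EuclideanSpace ℂ (Fin (n + 1)),
      U z = (WithLp.equiv 2 (Fin (n + 1) → ℂ)).symm fun i =>
        if (i : ℕ) = 0 then ξ ⟨0, hn⟩ * z ⟨1, by omega⟩
        else if (i : ℕ) = 1 then z ⟨0, by omega⟩
        else ξ ⟨(i : ℕ) - 1, by have := i.isLt; omega⟩ * z i) :
    realUnitSphere (Fin (n + 1)) ∩ U '' realUnitSphere (Fin (n + 1)) =
        {EuclideanSpace.single 1 1, -EuclideanSpace.single 1 1} ∧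
      realUnitSphere (Fin (n + 1)) ∩ U ⁻¹' realUnitSphere (Fin (n + 1)) =
        {EuclideanSpace.single 0 1, -EuclideanSpace.single 0 1} := by
  obtain ⟨N, rfl⟩ : ∃ N, n = N + 1 := ⟨n - 1, by omega⟩
  -- For `i = 0` the truncated index `i - 1` is `0`, as it should be.
  let c : Fin (N + 2) → ℂ := fun i => if i = 1 then 1 else ξ ⟨(i : ℕ) - 1, by omega⟩
  have hc₁ : c 1 = 1 ∨ c 1 = -1 := .inl (if_pos rfl)
  have hc : ∀ i ≠ 1, (c i).im ≠ 0 := fun i hi => by simpa only [c, if_neg hi] using hξ _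
  have hUc : U = monomialMap (Equiv.swap 0 1) c := by
    ext z i
    rw [hU, monomialMap_apply]
    match i with
    | 0 => simp [c]
    | 1 => simp [c]
    | ⟨k + 2, hk⟩ =>
      have hi₀ : (⟨k + 2, hk⟩ : Fin (N + 2)) ≠ 0 := by simp [Fin.ext_iff]
      have hi₁ : (⟨k + 2, hk⟩ : Fin (N + 2)) ≠ 1 := by simp [Fin.ext_iff]
      simp [c, hi₁, Equiv.swap_apply_of_ne_of_ne hi₀ hi₁]
  rw [hUc]
  refine ⟨realUnitSphere_inter_image_monomialMap hc₁ hc, ?_⟩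
  simpa only [Equiv.swap_apply_right] using
    realUnitSphere_inter_preimage_monomialMap (σ := Equiv.swap 0 1) hc₁ hc

/-- **The gluing points of Example 2:** with
`U(z¹, z², z³, …, z^{n+1}) = (ξ₂z², z¹, ξ₃z³, …, ξ_{n+1}z^{n+1})` built from integers
`m₂, …, mₙ` with `|m_s| ≥ 4` and `2·Σ 1/m_s ∉ ℤ` (and `ξ_{n+1} = −exp(−2πi·Σ 1/m_s)`),
the real equatorial `n`-sphere `S₀` satisfies `S₀ ∩ U(S₀) = {e₂, −e₂}` and
`S₀ ∩ U⁻¹(S₀) = {e₁, −e₁}`. -/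
theorem stmt_16 (n : ℕ) (hn : 2 ≤ n) (m : Fin (n - 1) → ℤ)
    (hm : ∀ j, 4 ≤ |m j|)
    (hnotint : ∀ z : ℤ, 2 * ∑ j, (1 / (m j : ℝ)) ≠ (z : ℝ))
    (ξ : Fin n → ℂ)
    (hξ : ∀ j : Fin (n - 1), ξ ⟨(j : ℕ), by have := j.isLt; omega⟩
      = Complex.exp (2 * Real.pi * Complex.I / (m j : ℂ)))
    (hξn : ξ ⟨n - 1, by omega⟩
      = -Complex.exp (-(2 * Real.pi * Complex.I) * ∑ j, (1 / (m j : ℂ))))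
    (U : EuclideanSpace ℂ (Fin (n + 1)) → EuclideanSpace ℂ (Fin (n + 1)))
    (hU : ∀ z : EuclideanSpace ℂ (Fin (n + 1)),
      U z = (WithLp.equiv 2 (Fin (n + 1) → ℂ)).symm fun i =>
        if (i : ℕ) = 0 then ξ ⟨0, by omega⟩ * z ⟨1, by omega⟩
        else if (i : ℕ) = 1 then z ⟨0, by omega⟩
        else ξ ⟨(i : ℕ) - 1, by have := i.isLt; omega⟩ * z i) :
    ({x : EuclideanSpace ℂ (Fin (n + 1)) | (∀ i, (x i).im = 0) ∧ ‖x‖ = 1} ∩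
        U '' {x : EuclideanSpace ℂ (Fin (n + 1)) | (∀ i, (x i).im = 0) ∧ ‖x‖ = 1}
      = {EuclideanSpace.single 1 1, -EuclideanSpace.single 1 1}) ∧
    ({x : EuclideanSpace ℂ (Fin (n + 1)) | (∀ i, (x i).im = 0) ∧ ‖x‖ = 1} ∩
        U ⁻¹' {x : EuclideanSpace ℂ (Fin (n + 1)) | (∀ i, (x i).im = 0) ∧ ‖x‖ = 1}
      = {EuclideanSpace.single 0 1, -EuclideanSpace.single 0 1}) := by
  obtain ⟨N, rfl⟩ : ∃ N, n = N + 1 := ⟨n - 1, by omega⟩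
  exact stmt_16_general (N + 1) N.succ_pos ξ (im_ne_zero_of_eq_exp_of_last_eq_neg_exp
    (fun j => (by norm_num : (3 : ℤ) ≤ 4).trans (hm j)) hnotint hξ hξn) U hU
end
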